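/- Let F: ℝ₊ → [0,1] be a Lipschitz continuous c.d.f. with Lipschitz constant L_F ∈ (0, ∞), let u < 1, x₀ > 0, b > 2/π, c(b) > 0 and T > 0. Then 3b²T² x₀^{2(u−1)} (∫₀^{2c(b)/T} |F(x₀) − F(x₀ e^r)| dr)² ≤ L_F² x₀^{2u} e^{4c(b)/T} · 12 b² (c(b))⁴ / T², which is of order O(T^{−2}) as T → ∞. -/

import Mathlib

/-!
Put `a = 2 * c / T`. For `0 < r ≤ a` the Lipschitz bound gives
`|F x₀ - F (x₀ * exp r)| ≤ L * x₀ * (exp r - 1) ≤ L * x₀ * exp a * r`, using `exp r - 1 ≤ r * exp r`.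
Integrating over `(0, a]` bounds the integral by `L * x₀ * exp a * a ^ 2 / 2`. Squaring this and
absorbing `x₀ ^ 2` into `x₀ ^ (2 * (u - 1))` gives exactly the right-hand side.
-/

/-- The integral is at most `L * x₀ * exp a * a ^ 2 / 2`. -/
lemma integral_abs_sub_le (F : ℝ → ℝ) (L x₀ a : ℝ) (hL : 0 < L)
    (hLip : ∀ s t : ℝ, 0 ≤ s → 0 ≤ t → |F s - F t| ≤ L * |s - t|)
    (hx₀ : 0 < x₀) (ha : 0 ≤ a) :
    (∫ r in Set.Ioc (0 : ℝ) a, |F x₀ - F (x₀ * Real.exp r)|) ≤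
      L * x₀ * Real.exp a * (a ^ 2 / 2) := by
  have hval : ∫ r in Set.Ioc (0 : ℝ) a, L * x₀ * Real.exp a * r =
      L * x₀ * Real.exp a * (a ^ 2 / 2) := by
    rw [← intervalIntegral.integral_of_le ha, intervalIntegral.integral_const_mul, integral_id]
    ring
  rw [← hval]
  refine MeasureTheory.integral_mono_of_nonneg
    (Filter.Eventually.of_forall fun r => abs_nonneg _) ?_ ?_
  · exact (Continuous.integrableOn_Icc (by fun_prop)).mono_set Set.Ioc_subset_Icc_self
  · filter_upwards [MeasureTheory.ae_restrict_mem measurableSet_Ioc] with r hr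
    have hr0 : 0 ≤ r := hr.1.le
    have h1 : 1 ≤ Real.exp r := Real.one_le_exp hr0
    -- This is `1 - r ≤ exp (-r)` multiplied by `exp r`.
    have h2 : Real.exp r - 1 ≤ r * Real.exp r := by
      have h3 := Real.add_one_le_exp (-r)
      have h4 : Real.exp (-r) * Real.exp r = 1 := by rw [← Real.exp_add]; simp
      nlinarith
    have h5 : r * Real.exp r ≤ r * Real.exp a :=
      mul_le_mul_of_nonneg_left (Real.exp_le_exp.mpr hr.2) hr0
    have h6 : |x₀ - x₀ * Real.exp r| = x₀ * (Real.exp r - 1) := by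
      rw [abs_sub_comm, abs_of_nonneg] <;> nlinarith
    calc |F x₀ - F (x₀ * Real.exp r)|
        ≤ L * |x₀ - x₀ * Real.exp r| := hLip _ _ hx₀.le (by positivity)
      _ = L * x₀ * (Real.exp r - 1) := by rw [h6]; ring
      _ ≤ L * x₀ * (r * Real.exp a) := by gcongr; exact h2.trans h5
      _ = L * x₀ * Real.exp a * r := by ring

theorem statement8 (F : ℝ → ℝ) (L u x₀ b c T : ℝ)
    (hrange : ∀ x : ℝ, 0 ≤ x → F x ∈ Set.Icc (0 : ℝ) 1) (hL : 0 < L)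
    (hLip : ∀ s t : ℝ, 0 ≤ s → 0 ≤ t → |F s - F t| ≤ L * |s - t|)
    (hu : u < 1) (hx₀ : 0 < x₀) (hb : 2 / Real.pi < b) (hc : 0 < c) (hT : 0 < T) :
    3 * b ^ 2 * T ^ 2 * x₀ ^ (2 * (u - 1)) *
        (∫ r in Set.Ioc (0 : ℝ) (2 * c / T), |F x₀ - F (x₀ * Real.exp r)|) ^ 2 ≤
      L ^ 2 * x₀ ^ (2 * u) * Real.exp (4 * c / T) * 12 * b ^ 2 * c ^ 4 / T ^ 2 := by
  have hI := integral_abs_sub_le F L x₀ (2 * c / T) hL hLip hx₀ (by positivity)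
  have hI0 : 0 ≤ ∫ r in Set.Ioc (0 : ℝ) (2 * c / T), |F x₀ - F (x₀ * Real.exp r)| :=
    MeasureTheory.integral_nonneg fun r => abs_nonneg _
  have hpow : x₀ ^ (2 * u) = x₀ ^ (2 * (u - 1)) * x₀ ^ 2 := by
    rw [← Real.rpow_natCast, ← Real.rpow_add hx₀]
    congr 1
    push_cast
    ring
  have hexp : Real.exp (4 * c / T) = Real.exp (2 * c / T) ^ 2 := by
    rw [← Real.exp_nat_mul]
    congr 1
    push_cast
    ring
  calc _ ≤ 3 * b ^ 2 * T ^ 2 * x₀ ^ (2 * (u - 1)) *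
        (L * x₀ * Real.exp (2 * c / T) * ((2 * c / T) ^ 2 / 2)) ^ 2 := by gcongr
    _ = _ := by
      rw [hpow, hexp]
      field_simp
      ring
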